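/- (Stability under extremum.) Let F = F(z,p,q) be continuous on Q×ℝ×ℝ, even and convex in p. Let S be a family of metric viscosity subsolutions (resp. supersolutions) of F(z,|Du|,∂ₜu)=0 in Q. Then ū(z) := sup_{v∈S} v(z) is a metric viscosity subsolution (resp. u̲(z) := inf_{v∈S} v(z) is a metric viscosity supersolution) of F(z,|Du|,∂ₜu)=0 in Q. -/

import Mathlib

open Filter Metric Set Topology

noncomputable section

/-- A geodesic metric space: any two points are joined by a constant-speed geodesic. -/
def IsGeodesicSpace (X : Type*) [MetricSpace X] : Prop :=
  ∀ x y : X, ∃ f : ℝ → X, f 0 = x ∧ f 1 = y ∧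
    ∀ s ∈ Set.Icc (0:ℝ) 1, ∀ t ∈ Set.Icc (0:ℝ) 1,
      dist (f s) (f t) = |s - t| * dist x y

variable {X : Type*} [MetricSpace X]

/-- Upper local mslope |∇⁺v|(x) = limsup_{y→x} [v(y)-v(x)]₊ / d(y,x). -/
def mslopeUp (v : X → ℝ) (x : X) : ℝ :=
  Filter.limsup (fun y => max (v y - v x) 0 / dist y x) (𝓝[≠] x)

/-- Lower local mslope |∇⁻v|(x) = limsup_{y→x} [v(y)-v(x)]₋ / d(y,x). -/
def mslopeDown (v : X → ℝ) (x : X) : ℝ :=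
  Filter.limsup (fun y => max (v x - v y) 0 / dist y x) (𝓝[≠] x)

/-- Local mslope |∇v|(x) = limsup_{y→x} |v(y)-v(x)| / d(y,x). -/
def mslope (v : X → ℝ) (x : X) : ℝ :=
  Filter.limsup (fun y => |v y - v x| / dist y x) (𝓝[≠] x)

/-- Spatial upper local mslope of a function of time and space. -/
def slopeUpT (u : ℝ × X → ℝ) (z : ℝ × X) : ℝ := mslopeUp (fun y => u (z.1, y)) z.2

/-- Spatial lower local mslope of a function of time and space. -/
def slopeDownT (u : ℝ × X → ℝ) (z : ℝ × X) : ℝ := mslopeDown (fun y => u (z.1, y)) z.2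

/-- Spatial local mslope of a function of time and space. -/
def slopeT (u : ℝ × X → ℝ) (z : ℝ × X) : ℝ := mslope (fun y => u (z.1, y)) z.2

/-- Time derivative ∂ₜu. -/
def timeDeriv (u : ℝ × X → ℝ) (z : ℝ × X) : ℝ := deriv (fun s => u (s, z.2)) z.1

/-- Locally Lipschitz on a set. -/
def LocLipOn {α : Type*} [PseudoMetricSpace α] (s : Set α) (f : α → ℝ) : Prop :=
  ∀ z ∈ s, ∃ K : NNReal, ∃ t ∈ 𝓝[s] z, LipschitzOnWith K f t

/-- The class 𝒞(Q): locally Lipschitz with (existing) continuous time derivative. -/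
def IsCQ (Q : Set (ℝ × X)) (u : ℝ × X → ℝ) : Prop :=
  LocLipOn Q u ∧
  (∀ z ∈ Q, DifferentiableAt ℝ (fun s : ℝ => u (s, z.2)) z.1) ∧
  ContinuousOn (timeDeriv u) Q

/-- The class C̲¹(Q). -/
def IsC1UnderQ (Q : Set (ℝ × X)) (u : ℝ × X → ℝ) : Prop :=
  IsCQ Q u ∧ Set.EqOn (slopeDownT u) (slopeT u) Q ∧ ContinuousOn (slopeT u) Q

/-- The class C̄¹(Q). -/
def IsC1UpperQ (Q : Set (ℝ × X)) (u : ℝ × X → ℝ) : Prop :=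
  IsCQ Q u ∧ Set.EqOn (slopeUpT u) (slopeT u) Q ∧ ContinuousOn (slopeT u) Q

/-- The class 𝒞(U) for stationary problems: locally Lipschitz functions. -/
def IsCU (U : Set X) (v : X → ℝ) : Prop := LocLipOn U v

/-- The class C̲¹(U). -/
def IsC1UnderU (U : Set X) (v : X → ℝ) : Prop :=
  IsCU U v ∧ Set.EqOn (mslopeDown v) (mslope v) U ∧ ContinuousOn (mslope v) U

/-- The class C̄¹(U). -/
def IsC1UpperU (U : Set X) (v : X → ℝ) : Prop :=
  IsCU U v ∧ Set.EqOn (mslopeUp v) (mslope v) U ∧ ContinuousOn (mslope v) U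

/-- F_r(z,p,q) = sup_{p'∈[-1,1]} F(z,p+rp',q) if r ≥ 0, inf if r ≤ 0. -/
def Fr (F : (ℝ × X) → ℝ → ℝ → ℝ) (r : ℝ) (z : ℝ × X) (p q : ℝ) : ℝ :=
  if 0 ≤ r then sSup ((fun p' => F z (p + r * p') q) '' Set.Icc (-1:ℝ) 1)
  else sInf ((fun p' => F z (p + r * p') q) '' Set.Icc (-1:ℝ) 1)

/-- H_r(x,p) = sup_{p'∈[-1,1]} H(x,p+rp') if r ≥ 0, inf if r ≤ 0. -/
def Hr (H : X → ℝ → ℝ) (r : ℝ) (x : X) (p : ℝ) : ℝ :=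
  if 0 ≤ r then sSup ((fun p' => H x (p + r * p')) '' Set.Icc (-1:ℝ) 1)
  else sInf ((fun p' => H x (p + r * p')) '' Set.Icc (-1:ℝ) 1)

/-- Upper semicontinuous envelope (relative to a set) of an extended-real function. -/
def uscEnv {α : Type*} [TopologicalSpace α] (s : Set α) (u : α → EReal) (z : α) : EReal :=
  Filter.limsup u (𝓝[s] z)

/-- Lower semicontinuous envelope (relative to a set) of an extended-real function. -/
def lscEnv {α : Type*} [TopologicalSpace α] (s : Set α) (u : α → EReal) (z : α) : EReal :=
  Filter.liminf u (𝓝[s] z)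

/-- Upper semicontinuous envelope (relative to a set) of a real function. -/
def uscEnvR {α : Type*} [TopologicalSpace α] (s : Set α) (f : α → ℝ) (z : α) : ℝ :=
  Filter.limsup f (𝓝[s] z)

/-- Metric viscosity subsolution of F(z,|Du|,∂ₜu)=0 in Q (Gangbo–Święch). -/
def IsSubsol (Q : Set (ℝ × X)) (F : (ℝ × X) → ℝ → ℝ → ℝ) (u : ℝ × X → EReal) : Prop :=
  ∀ ψ₁ ψ₂ : ℝ × X → ℝ, IsC1UnderQ Q ψ₁ → IsCQ Q ψ₂ → ∀ z ∈ Q,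
    (∃ R > 0, uscEnv Q u z = ((ψ₁ z + ψ₂ z : ℝ) : EReal) ∧
      ∀ w ∈ Metric.ball z R ∩ Q, uscEnv Q u w ≤ ((ψ₁ w + ψ₂ w : ℝ) : EReal)) →
    Fr F (-(uscEnvR Q (slopeT ψ₂) z)) z (slopeT ψ₁ z)
      (timeDeriv (fun w => ψ₁ w + ψ₂ w) z) ≤ 0

/-- Metric viscosity supersolution of F(z,|Du|,∂ₜu)=0 in Q (Gangbo–Święch). -/
def IsSupersol (Q : Set (ℝ × X)) (F : (ℝ × X) → ℝ → ℝ → ℝ) (u : ℝ × X → EReal) : Prop :=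
  ∀ ψ₁ ψ₂ : ℝ × X → ℝ, IsC1UpperQ Q ψ₁ → IsCQ Q ψ₂ → ∀ z ∈ Q,
    (∃ R > 0, lscEnv Q u z = ((ψ₁ z + ψ₂ z : ℝ) : EReal) ∧
      ∀ w ∈ Metric.ball z R ∩ Q, ((ψ₁ w + ψ₂ w : ℝ) : EReal) ≤ lscEnv Q u w) →
    0 ≤ Fr F (uscEnvR Q (slopeT ψ₂) z) z (slopeT ψ₁ z)
      (timeDeriv (fun w => ψ₁ w + ψ₂ w) z)

/-- Metric viscosity solution. -/
def IsSol (Q : Set (ℝ × X)) (F : (ℝ × X) → ℝ → ℝ → ℝ) (u : ℝ × X → EReal) : Prop :=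
  IsSubsol Q F u ∧ IsSupersol Q F u

/-- Metric viscosity subsolution of the stationary equation H(x,|Dv|)=0 in U. -/
def IsSubsolS (U : Set X) (H : X → ℝ → ℝ) (v : X → EReal) : Prop :=
  ∀ ψ₁ ψ₂ : X → ℝ, IsC1UnderU U ψ₁ → IsCU U ψ₂ → ∀ x ∈ U,
    (∃ R > 0, uscEnv U v x = ((ψ₁ x + ψ₂ x : ℝ) : EReal) ∧
      ∀ w ∈ Metric.ball x R ∩ U, uscEnv U v w ≤ ((ψ₁ w + ψ₂ w : ℝ) : EReal)) →
    Hr H (-(uscEnvR U (mslope ψ₂) x)) x (mslope ψ₁ x) ≤ 0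

/-- Metric viscosity supersolution of the stationary equation H(x,|Dv|)=0 in U. -/
def IsSupersolS (U : Set X) (H : X → ℝ → ℝ) (v : X → EReal) : Prop :=
  ∀ ψ₁ ψ₂ : X → ℝ, IsC1UpperU U ψ₁ → IsCU U ψ₂ → ∀ x ∈ U,
    (∃ R > 0, lscEnv U v x = ((ψ₁ x + ψ₂ x : ℝ) : EReal) ∧
      ∀ w ∈ Metric.ball x R ∩ U, ((ψ₁ w + ψ₂ w : ℝ) : EReal) ≤ lscEnv U v w) →
    0 ≤ Hr H (uscEnvR U (mslope ψ₂) x) x (mslope ψ₁ x)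

/-- Metric viscosity solution of the stationary equation. -/
def IsSolS (U : Set X) (H : X → ℝ → ℝ) (v : X → EReal) : Prop :=
  IsSubsolS U H v ∧ IsSupersolS U H v

section Limsup

theorem limsup_nonneg_of_nonneg {α : Type*} {f : Filter α} {u : α → ℝ} (hu : ∀ a, 0 ≤ u a) :
    0 ≤ limsup u f := by
  rcases f.eq_or_neBot with rfl | hf
  · simp [limsup, limsSup]
  · refine Real.sInf_nonneg fun a ha => ?_
    obtain ⟨x, hx⟩ := (eventually_map.1 ha).exists
    exact (hu x).trans hx

theorem limsup_le_of_nonneg_of_eventually_le {α : Type*} {f : Filter α} {u : α → ℝ} {C : ℝ}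
    (hu : ∀ a, 0 ≤ u a) (hC : 0 ≤ C) (h : ∀ᶠ a in f, u a ≤ C) : limsup u f ≤ C := by
  rcases f.eq_or_neBot with rfl | hf
  · simpa [limsup, limsSup] using hC
  · exact limsup_le_of_le (isCoboundedUnder_le_of_le f hu) h

theorem le_uscEnv {α : Type*} [TopologicalSpace α] {s : Set α} (u : α → EReal) {z : α}
    (hz : z ∈ s) : u z ≤ uscEnv s u z :=
  le_limsup_of_frequently_le' fun h => (mem_of_mem_nhdsWithin hz h) le_rfl

theorem uscEnv_mono {α : Type*} [TopologicalSpace α] {s : Set α} {u v : α → EReal}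
    (h : ∀ a, u a ≤ v a) (z : α) : uscEnv s u z ≤ uscEnv s v z :=
  limsup_le_limsup (Eventually.of_forall h)

theorem IsOpen.eventually_uscEnv_lt {α : Type*} [TopologicalSpace α] {s : Set α} (hs : IsOpen s)
    {u : α → EReal} {z : α} (hz : z ∈ s) {a : EReal} (h : uscEnv s u z < a) :
    ∀ᶠ w in 𝓝 z, uscEnv s u w < a := by
  obtain ⟨b, hb, hba⟩ := exists_between h
  have hev : ∀ᶠ w in 𝓝 z, u w < b := by
    have := eventually_lt_of_limsup_lt (u := u) hb
    rwa [hs.nhdsWithin_eq hz] at this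
  filter_upwards [hev.eventually_nhds] with w hw
  exact (limsup_le_of_le (h := (hw.filter_mono nhdsWithin_le_nhds).mono fun _ => le_of_lt)).trans_lt
    hba

end Limsup

section Slope

theorem mslope_nonneg (v : X → ℝ) (x : X) : 0 ≤ mslope v x :=
  limsup_nonneg_of_nonneg fun _ => by positivity

theorem mslope_le_of_eventually {v : X → ℝ} {x : X} {C : ℝ} (hC : 0 ≤ C)
    (h : ∀ᶠ y in 𝓝 x, |v y - v x| ≤ C * dist y x) : mslope v x ≤ C := by
  refine limsup_le_of_nonneg_of_eventually_le (fun _ => by positivity) hC ?_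
  filter_upwards [h.filter_mono nhdsWithin_le_nhds, self_mem_nhdsWithin] with y hy hne
  exact div_le_of_le_mul₀ dist_nonneg hC hy

theorem mslope_add_le {v g : X → ℝ} {x : X} {C K L : ℝ} (hL : 0 ≤ L)
    (hv : ∀ᶠ y in 𝓝 x, |v y - v x| ≤ K * dist y x) (hvC : mslope v x < C)
    (hg : ∀ᶠ y in 𝓝 x, |g y - g x| ≤ L * dist y x) :
    mslope (fun y => v y + g y) x ≤ C + L := by
  have hbdd : (𝓝[≠] x).IsBoundedUnder (· ≤ ·) fun y => |v y - v x| / dist y x := by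
    refine ⟨K, eventually_map.2 ?_⟩
    filter_upwards [hv.filter_mono nhdsWithin_le_nhds, self_mem_nhdsWithin] with y hy hne
    exact (div_le_iff₀ (dist_pos.2 hne)).2 hy
  have hC := eventually_nhdsWithin_iff.1 (eventually_lt_of_limsup_lt hvC hbdd)
  refine mslope_le_of_eventually (add_nonneg ((mslope_nonneg v x).trans hvC.le) hL) ?_
  filter_upwards [hC, hg] with y hy hgy
  rcases eq_or_ne y x with rfl | hne
  · simp
  have h1 := (div_le_iff₀ (dist_pos.2 hne)).1 (hy hne).le
  calc |v y + g y - (v x + g x)| = |(v y - v x) + (g y - g x)| := by ring_nf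
    _ ≤ |v y - v x| + |g y - g x| := abs_add_le _ _
    _ ≤ (C + L) * dist y x := by linarith

theorem slopeT_nonneg (u : ℝ × X → ℝ) (z : ℝ × X) : 0 ≤ slopeT u z := mslope_nonneg _ _

theorem uscEnvR_slopeT_nonneg (Q : Set (ℝ × X)) (u : ℝ × X → ℝ) (z : ℝ × X) :
    0 ≤ uscEnvR Q (slopeT u) z :=
  limsup_nonneg_of_nonneg (slopeT_nonneg u)

theorem LocLipOn.exists_eventually_abs_sub_le {Q : Set (ℝ × X)} (hQ : IsOpen Q)
    {u : ℝ × X → ℝ} (hu : LocLipOn Q u) {z : ℝ × X} (hz : z ∈ Q) :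
    ∃ K : ℝ, 0 ≤ K ∧ ∀ᶠ w in 𝓝 z, ∀ᶠ y in 𝓝 w.2, |u (w.1, y) - u w| ≤ K * dist y w.2 := by
  obtain ⟨K, t, ht, hK⟩ := hu z hz
  rw [hQ.nhdsWithin_eq hz] at ht
  refine ⟨K, K.2, ?_⟩
  filter_upwards [eventually_mem_nhds_iff.2 ht] with w hw
  have hc : Tendsto (fun y : X => (w.1, y)) (𝓝 w.2) (𝓝 w) :=
    (Continuous.prodMk_right w.1).tendsto w.2
  filter_upwards [hc hw] with y hy
  have := hK.dist_le_mul _ hy _ (mem_of_mem_nhds hw)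
  rw [Real.dist_eq] at this
  refine this.trans_eq ?_
  rw [Prod.dist_eq]
  simp

theorem LocLipOn.eventually_slopeT_lt {Q : Set (ℝ × X)} (hQ : IsOpen Q)
    {u : ℝ × X → ℝ} (hu : LocLipOn Q u) {z : ℝ × X} (hz : z ∈ Q) {C : ℝ}
    (hC : uscEnvR Q (slopeT u) z < C) : ∀ᶠ w in 𝓝 z, slopeT u w < C := by
  obtain ⟨K, hK0, hK⟩ := hu.exists_eventually_abs_sub_le hQ hz
  have hbdd : (𝓝[Q] z).IsBoundedUnder (· ≤ ·) (slopeT u) := by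
    refine ⟨K, eventually_map.2 ?_⟩
    filter_upwards [hK.filter_mono nhdsWithin_le_nhds] with w hw
    exact mslope_le_of_eventually hK0 hw
  have := eventually_lt_of_limsup_lt hC hbdd
  rwa [hQ.nhdsWithin_eq hz] at this

end Slope

section Hamiltonian

theorem Fr_neg_nonpos_iff {Y : Type*} {F : (ℝ × Y) → ℝ → ℝ → ℝ} {r : ℝ} (hr : 0 ≤ r)
    {z : ℝ × Y} {p q : ℝ}
    (hF : Continuous fun p => F z p q) :
    Fr F (-r) z p q ≤ 0 ↔ ∃ s, |s| ≤ r ∧ F z (p + s) q ≤ 0 := by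
  have hcpt : IsCompact ((fun p' => F z (p + -r * p') q) '' Icc (-1 : ℝ) 1) :=
    isCompact_Icc.image (hF.comp (by fun_prop))
  have hne : ((fun p' => F z (p + -r * p') q) '' Icc (-1 : ℝ) 1).Nonempty :=
    (nonempty_Icc.2 (by norm_num)).image _
  have hmem : Fr F (-r) z p q ∈ (fun p' => F z (p + -r * p') q) '' Icc (-1 : ℝ) 1 := by
    unfold Fr
    split_ifs
    exacts [hcpt.sSup_mem hne, hcpt.sInf_mem hne]
  constructor
  · intro h
    obtain ⟨p', hp', heq⟩ := hmem
    refine ⟨-r * p', ?_, heq.trans_le h⟩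
    rw [abs_mul, abs_neg, abs_of_nonneg hr]
    exact mul_le_of_le_one_right hr (abs_le.2 hp')
  · rintro ⟨s, hs, h⟩
    rcases hr.eq_or_lt with rfl | hr
    · obtain ⟨p', -, heq⟩ := hmem
      obtain rfl : s = 0 := by simpa using hs
      rw [← heq]
      simpa using h
    · rw [Fr, if_neg (by linarith)]
      refine (csInf_le hcpt.bddBelow ⟨-(s / r), ?_, rfl⟩).trans ?_
      · rw [mem_Icc, ← abs_le, abs_neg, abs_div, abs_of_pos hr]
        exact div_le_one_of_le₀ hs hr.le
      · simpa [mul_div_cancel₀ s hr.ne'] using h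

theorem Fr_nonneg_iff {Y : Type*} {F : (ℝ × Y) → ℝ → ℝ → ℝ} {r : ℝ} (hr : 0 ≤ r)
    {z : ℝ × Y} {p q : ℝ}
    (hF : Continuous fun p => F z p q) :
    0 ≤ Fr F r z p q ↔ ∃ s, |s| ≤ r ∧ 0 ≤ F z (p + s) q := by
  have hcpt : IsCompact ((fun p' => F z (p + r * p') q) '' Icc (-1 : ℝ) 1) :=
    isCompact_Icc.image (hF.comp (by fun_prop))
  have hne : ((fun p' => F z (p + r * p') q) '' Icc (-1 : ℝ) 1).Nonempty :=
    (nonempty_Icc.2 (by norm_num)).image _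
  rw [Fr, if_pos hr]
  constructor
  · intro h
    obtain ⟨p', hp', heq⟩ := hcpt.sSup_mem hne
    refine ⟨r * p', ?_, h.trans_eq heq.symm⟩
    rw [abs_mul, abs_of_nonneg hr]
    exact mul_le_of_le_one_right hr (abs_le.2 hp')
  · rintro ⟨s, hs, h⟩
    have hmem : s / r ∈ Icc (-1 : ℝ) 1 := by
      rw [mem_Icc, ← abs_le, abs_div, abs_of_nonneg hr]
      exact div_le_one_of_le₀ hs hr
    have hrs : r * (s / r) = s := by
      rcases hr.eq_or_lt with rfl | hr
      · simpa [eq_comm] using hs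
      · field_simp
    refine le_trans ?_ (le_csSup hcpt.bddAbove ⟨s / r, hmem, rfl⟩)
    simpa [hrs] using h

end Hamiltonian

section TestFunctions

theorem IsCQ.add {Q : Set (ℝ × X)} {u v : ℝ × X → ℝ} (hu : IsCQ Q u) (hv : IsCQ Q v) :
    IsCQ Q fun z => u z + v z := by
  refine ⟨LocallyLipschitzOn.add hu.1 hv.1, fun z hz => (hu.2.1 z hz).fun_add (hv.2.1 z hz), ?_⟩
  refine (hu.2.2.add hv.2.2).congr fun z hz => ?_
  exact deriv_fun_add (hu.2.1 z hz) (hv.2.1 z hz)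

theorem IsCQ.timeDeriv_add {Q : Set (ℝ × X)} {u v : ℝ × X → ℝ} (hu : IsCQ Q u) (hv : IsCQ Q v)
    {z : ℝ × X} (hz : z ∈ Q) :
    timeDeriv (fun w => u w + v w) z = timeDeriv u z + timeDeriv v z :=
  deriv_fun_add (hu.2.1 z hz) (hv.2.1 z hz)

theorem timeDeriv_neg {Y : Type*} (u : ℝ × Y → ℝ) (z : ℝ × Y) :
    timeDeriv (fun w => -u w) z = -timeDeriv u z :=
  deriv.fun_neg

theorem IsCQ.neg {Q : Set (ℝ × X)} {u : ℝ × X → ℝ} (hu : IsCQ Q u) : IsCQ Q fun z => -u z :=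
  ⟨LocallyLipschitzOn.neg hu.1, fun z hz => (hu.2.1 z hz).fun_neg,
    hu.2.2.neg.congr fun z _ => timeDeriv_neg u z⟩

theorem slopeT_neg (u : ℝ × X → ℝ) : slopeT (fun w => -u w) = slopeT u := by
  funext z
  simp only [slopeT, mslope, neg_sub_neg, abs_sub_comm]

theorem slopeDownT_neg (u : ℝ × X → ℝ) : slopeDownT (fun w => -u w) = slopeUpT u := by
  funext z
  simp only [slopeDownT, slopeUpT, mslopeDown, mslopeUp, neg_sub_neg]

theorem slopeUpT_neg (u : ℝ × X → ℝ) : slopeUpT (fun w => -u w) = slopeDownT u := by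
  funext z
  simp only [slopeDownT, slopeUpT, mslopeDown, mslopeUp, neg_sub_neg]

theorem IsC1UpperQ.neg {Q : Set (ℝ × X)} {u : ℝ × X → ℝ} (hu : IsC1UpperQ Q u) :
    IsC1UnderQ Q fun z => -u z := by
  rw [IsC1UnderQ, slopeDownT_neg, slopeT_neg]
  exact ⟨hu.1.neg, hu.2⟩

theorem IsC1UnderQ.neg {Q : Set (ℝ × X)} {u : ℝ × X → ℝ} (hu : IsC1UnderQ Q u) :
    IsC1UpperQ Q fun z => -u z := by
  rw [IsC1UpperQ, slopeUpT_neg, slopeT_neg]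
  exact ⟨hu.1.neg, hu.2⟩

/-- The perturbation `(t - t₀)² + d(x, x₀)² + ε d(x, x₁) + c`, where `z₀ = (t₀, x₀)`. -/
def quadPert (z₀ : ℝ × X) (ε : ℝ) (x₁ : X) (c : ℝ) (z : ℝ × X) : ℝ :=
  (z.1 - z₀.1) ^ 2 + dist z.2 z₀.2 ^ 2 + ε * dist z.2 x₁ + c

theorem hasDerivAt_quadPert (z₀ : ℝ × X) (ε : ℝ) (x₁ : X) (c : ℝ) (z : ℝ × X) :
    HasDerivAt (fun s => quadPert z₀ ε x₁ c (s, z.2)) (2 * (z.1 - z₀.1)) z.1 := by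
  have h := ((((hasDerivAt_id z.1).sub_const z₀.1).fun_pow 2).add_const
    (dist z.2 z₀.2 ^ 2 + ε * dist z.2 x₁ + c))
  simp only [id, Nat.cast_ofNat, Nat.add_one_sub_one, pow_one, mul_one] at h
  simpa only [quadPert, add_assoc] using h

theorem timeDeriv_quadPert (z₀ : ℝ × X) (ε : ℝ) (x₁ : X) (c : ℝ) (z : ℝ × X) :
    timeDeriv (quadPert z₀ ε x₁ c) z = 2 * (z.1 - z₀.1) :=
  (hasDerivAt_quadPert z₀ ε x₁ c z).deriv

theorem isCQ_quadPert (Q : Set (ℝ × X)) (z₀ : ℝ × X) (ε : ℝ) (x₁ : X) (c : ℝ) :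
    IsCQ Q (quadPert z₀ ε x₁ c) := by
  refine ⟨?_, fun z _ => (hasDerivAt_quadPert z₀ ε x₁ c z).differentiableAt, ?_⟩
  · have hsq : LocallyLipschitz fun a : ℝ => a ^ 2 :=
      (contDiff_id.pow 2 : ContDiff ℝ 1 fun a : ℝ => id a ^ 2).locallyLipschitz
    have hmul : LocallyLipschitz fun a : ℝ => ε * a :=
      (contDiff_const.mul contDiff_id : ContDiff ℝ 1 fun a : ℝ => ε * id a).locallyLipschitz
    have hfst : LocallyLipschitz fun z : ℝ × X => z.1 - z₀.1 :=
      LipschitzWith.prod_fst.locallyLipschitz.sub (.const _)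
    have hdist : ∀ y : X, LocallyLipschitz fun z : ℝ × X => dist z.2 y := fun y =>
      (LipschitzWith.dist_left y).locallyLipschitz.comp LipschitzWith.prod_snd.locallyLipschitz
    exact ((((hsq.comp hfst).add (hsq.comp (hdist z₀.2))).add (hmul.comp (hdist x₁))).add
      (.const c)).locallyLipschitzOn
  · rw [funext (timeDeriv_quadPert z₀ ε x₁ c)]
    fun_prop

theorem abs_quadPert_sub_le {z₀ : ℝ × X} {ε : ℝ} (hε : 0 ≤ ε) (x₁ : X) (c : ℝ) {r t : ℝ}
    {x y : X} (hx : dist x z₀.2 ≤ r) (hy : dist y z₀.2 ≤ r) :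
    |quadPert z₀ ε x₁ c (t, y) - quadPert z₀ ε x₁ c (t, x)| ≤ (2 * r + ε) * dist y x := by
  have h1 := abs_dist_sub_le y x z₀.2
  have h2 := abs_dist_sub_le y x x₁
  have h3 : quadPert z₀ ε x₁ c (t, y) - quadPert z₀ ε x₁ c (t, x) =
      (dist y z₀.2 - dist x z₀.2) * (dist y z₀.2 + dist x z₀.2)
        + ε * (dist y x₁ - dist x x₁) := by
    simp only [quadPert]
    ring
  rw [h3]
  refine (abs_add_le _ _).trans ?_
  rw [abs_mul, abs_mul, abs_of_nonneg hε,
    abs_of_nonneg (add_nonneg (dist_nonneg (x := y)) (dist_nonneg (x := x) (y := z₀.2)))]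
  have h4 : |dist y z₀.2 - dist x z₀.2| * (dist y z₀.2 + dist x z₀.2) ≤ dist y x * (r + r) :=
    mul_le_mul h1 (add_le_add hy hx) (by positivity) dist_nonneg
  have h5 := mul_le_mul_of_nonneg_left h2 hε
  linarith

end TestFunctions

/-- Ekeland's variational principle on the product of a compact set and a complete set, in which
only the distance in the second factor is penalised. -/
theorem exists_forall_le_add_mul_dist_snd {T Y : Type*} [MetricSpace T] [MetricSpace Y]
    {I : Set T} {B : Set Y} (hI : IsCompact I) (hB : IsComplete B) {f : T × Y → ℝ}
    (hf : LowerSemicontinuousOn f (I ×ˢ B)) (hf0 : ∀ z ∈ I ×ˢ B, 0 ≤ f z)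
    {ε : ℝ} (hε : 0 < ε) {z₀ : T × Y} (hz₀ : z₀ ∈ I ×ˢ B) :
    ∃ z ∈ I ×ˢ B, f z ≤ f z₀ ∧ ∀ w ∈ I ×ˢ B, f z ≤ f w + ε * dist w.2 z.2 := by
  let K := I ×ˢ B
  let A : T × Y → Set (T × Y) := fun z => {w | w ∈ K ∧ f w + ε * dist w.2 z.2 ≤ f z}
  have hself : ∀ z ∈ K, z ∈ A z := fun z hz => ⟨hz, by simp⟩
  have htrans : ∀ z w y, w ∈ A z → y ∈ A w → y ∈ A z := by
    rintro z w y ⟨hw, hwz⟩ ⟨hy, hyw⟩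
    refine ⟨hy, ?_⟩
    nlinarith [dist_triangle y.2 w.2 z.2]
  have hnext : ∀ (n : ℕ) (z : K), ∃ w : K, (w : T × Y) ∈ A z ∧
      ∀ y ∈ A z, f w ≤ f y + 1 / ((n : ℝ) + 1) := by
    rintro n ⟨z, hz⟩
    have hne : (f '' A z).Nonempty := ⟨f z, z, hself z hz, rfl⟩
    have hbdd : BddBelow (f '' A z) := ⟨0, by rintro _ ⟨w, hw, rfl⟩; exact hf0 w hw.1⟩
    obtain ⟨_, ⟨w, hw, rfl⟩, hlt⟩ :=
      exists_lt_of_csInf_lt hne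
        (lt_add_of_pos_right (sInf (f '' A z)) (Nat.one_div_pos_of_nat (n := n)))
    refine ⟨⟨w, hw.1⟩, hw, fun y hy => ?_⟩
    have := csInf_le hbdd ⟨y, hy, rfl⟩
    simp only at *
    linarith
  choose next hnextA hnext_le using hnext
  obtain ⟨s, hs0, hsucc⟩ : ∃ s : ℕ → K, s 0 = ⟨z₀, hz₀⟩ ∧ ∀ n, s (n + 1) = next n (s n) :=
    ⟨fun n => Nat.rec ⟨z₀, hz₀⟩ next n, rfl, fun _ => rfl⟩
  have hmem : ∀ n m, n ≤ m → (s m : T × Y) ∈ A (s n) := by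
    intro n m hnm
    induction m, hnm using Nat.le_induction with
    | base => exact hself _ (s n).2
    | succ m _ ih => exact htrans _ _ _ ih (by rw [hsucc]; exact hnextA m (s m))
  have hanti : Antitone fun n => f (s n) := fun n m hnm => by
    have := (hmem n m hnm).2
    have := mul_nonneg hε.le (dist_nonneg (x := (s m : T × Y).2) (y := (s n : T × Y).2))
    simp only
    linarith
  have hbdd : BddBelow (range fun n => f (s n)) := ⟨0, by rintro _ ⟨n, rfl⟩; exact hf0 _ (s n).2⟩
  have hlim := tendsto_atTop_ciInf hanti hbdd
  set l := ⨅ n, f (s n) with hl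
  have hcauchy : CauchySeq fun n => (s n : T × Y).2 := by
    refine cauchySeq_of_le_tendsto_0' (fun n => (f (s n) - l) / ε) (fun n m hnm => ?_) ?_
    · rw [le_div_iff₀ hε, dist_comm]
      have := (hmem n m hnm).2
      have := ciInf_le hbdd m
      linarith
    · simpa using (hlim.sub_const l).div_const ε
  obtain ⟨x, hx, hxlim⟩ := cauchySeq_tendsto_of_isComplete hB (fun n => (s n).2.2) hcauchy
  obtain ⟨t, ht, φ, hφ, htlim⟩ := hI.tendsto_subseq (fun n => (s n).2.1)
  have hzlim : Tendsto (fun n => (s (φ n) : T × Y)) atTop (𝓝[K] (t, x)) := by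
    refine tendsto_nhdsWithin_iff.2 ⟨?_, Eventually.of_forall fun n => (s (φ n)).2⟩
    exact htlim.prodMk_nhds (hxlim.comp hφ.tendsto_atTop)
  have hzK : (t, x) ∈ K := ⟨ht, hx⟩
  have hfz : f (t, x) ≤ l := by
    refine le_of_forall_lt fun a ha => ?_
    obtain ⟨b, hab, hb⟩ := exists_between ha
    have hev := hzlim.eventually (hf _ hzK b hb)
    exact hab.trans_le (ge_of_tendsto (hlim.comp hφ.tendsto_atTop) (hev.mono fun n hn => hn.le))
  have hzA : ∀ n, (t, x) ∈ A (s n) := by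
    intro n
    refine ⟨hzK, ?_⟩
    have h1 : Tendsto (fun m => ε * dist (s m : T × Y).2 (s n : T × Y).2) atTop
        (𝓝 (ε * dist x (s n : T × Y).2)) := (hxlim.dist tendsto_const_nhds).const_mul ε
    have h2 := le_of_tendsto (hlim.add h1) ((eventually_ge_atTop n).mono fun m hm => (hmem n m hm).2)
    simp only
    linarith
  refine ⟨(t, x), hzK, ?_, fun w hw => ?_⟩
  · have h := (hzA 0).2
    rw [hs0] at h
    simp only at h
    have := mul_nonneg hε.le (dist_nonneg (x := x) (y := z₀.2))
    linarith
  · by_contra! hlt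
    have hwA : w ∈ A (t, x) := ⟨hw, hlt.le⟩
    have hle : l ≤ f w := by
      have h1 : Tendsto (fun n : ℕ => f w + 1 / ((n : ℝ) + 1)) atTop (𝓝 (f w + 0)) :=
        tendsto_const_nhds.add tendsto_one_div_add_atTop_nhds_zero_nat
      rw [add_zero] at h1
      refine ge_of_tendsto h1 (Eventually.of_forall fun n => ?_)
      have h2 := ciInf_le hbdd (n + 1)
      simp only [hsucc] at h2
      exact h2.trans (hnext_le n (s n) w (htrans _ _ _ (hzA n) hwA))
    have := mul_nonneg hε.le (dist_nonneg (x := w.2) (y := x))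
    simp only at hlt
    linarith

section Stability

theorem continuous_of_continuousOn_prod {Q : Set (ℝ × X)} {F : (ℝ × X) → ℝ → ℝ → ℝ}
    (hFc : ContinuousOn (fun w : (ℝ × X) × ℝ × ℝ => F w.1 w.2.1 w.2.2)
      (Q ×ˢ ((univ : Set ℝ) ×ˢ (univ : Set ℝ)))) {z : ℝ × X} (hz : z ∈ Q) (q : ℝ) :
    Continuous fun p => F z p q :=
  hFc.comp_continuous (f := fun p : ℝ => (z, p, q)) (by fun_prop) fun _ => ⟨hz, trivial, trivial⟩

/-- If `sup S` is touched from above by `ψ₁ + ψ₂` at `z₀`, then near `z₀` some `v ∈ S` is touched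
from above by `ψ₁ + ψ₂` plus a small perturbation. -/
theorem exists_touching_of_iSup [CompleteSpace X] {Q : Set (ℝ × X)} (hQ : IsOpen Q)
    {S : Set ((ℝ × X) → EReal)} {ψ : ℝ × X → ℝ} (hψ : ContinuousOn ψ Q) {z₀ : ℝ × X} {r ε : ℝ}
    (hr : 0 < r) (hε : 0 < ε) (hrQ : closedBall z₀ r ⊆ Q)
    (hψ1 : ∀ w ∈ closedBall z₀ r, ψ z₀ - 1 ≤ ψ w)
    (heq : uscEnv Q (fun z => ⨆ v ∈ S, v z) z₀ = (ψ z₀ : EReal))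
    (hle : ∀ w ∈ closedBall z₀ r, uscEnv Q (fun z => ⨆ v ∈ S, v z) w ≤ (ψ w : EReal)) :
    ∃ v ∈ S, ∃ w ∈ ball z₀ r, ∃ c : ℝ,
      uscEnv Q v w = ((ψ w + quadPert z₀ ε w.2 c w : ℝ) : EReal) ∧
      ∀ w' ∈ ball z₀ r, uscEnv Q v w' ≤ ((ψ w' + quadPert z₀ ε w.2 c w' : ℝ) : EReal) := by
  obtain ⟨δ, hδ, hδr⟩ : ∃ δ > 0, 2 * δ < min (r ^ 2) 1 :=
    ⟨min (r ^ 2) 1 / 4, by positivity, by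
      have : 0 < min (r ^ 2) 1 := by positivity
      linarith⟩
  have hδr2 := hδr.trans_le (min_le_left _ _)
  have hδ1 := hδr.trans_le (min_le_right _ _)
  have hz₀ : z₀ ∈ Q := hrQ (mem_closedBall_self hr.le)
  let φ : ℝ × X → ℝ := fun z => (z.1 - z₀.1) ^ 2 + dist z.2 z₀.2 ^ 2
  have hφ : Continuous φ := by fun_prop
  have hφ0 : ∀ z, 0 ≤ φ z := fun z => by positivity
  have hψφ : ContinuousAt (fun z => ψ z + φ z) z₀ :=
    (hψ.continuousAt (hQ.mem_nhds hz₀)).add hφ.continuousAt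
  have hnear : ∀ᶠ w in 𝓝 z₀, ψ w + φ w < ψ z₀ + δ :=
    hψφ.eventually_lt_const (by simp [φ, hδ])
  have hfreq : ∃ᶠ w in 𝓝 z₀, ((ψ z₀ - δ : ℝ) : EReal) < ⨆ v ∈ S, v w := by
    have : ((ψ z₀ - δ : ℝ) : EReal) < uscEnv Q (fun z => ⨆ v ∈ S, v z) z₀ := by
      rw [heq]
      exact_mod_cast sub_lt_self _ hδ
    have := frequently_lt_of_lt_limsup (h := this)
    rwa [hQ.nhdsWithin_eq hz₀] at this
  obtain ⟨w₀, hw₀S, hw₀φ, hw₀r⟩ :=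
    (hfreq.and_eventually (hnear.and (closedBall_mem_nhds z₀ hr))).exists
  simp only [lt_iSup_iff] at hw₀S
  obtain ⟨v, hv, hvw₀⟩ := hw₀S
  have hvle : ∀ w ∈ closedBall z₀ r, uscEnv Q v w ≤ (ψ w : EReal) := fun w hw =>
    (uscEnv_mono (fun a => le_biSup (fun v : ℝ × X → EReal => v a) hv) w).trans (hle w hw)
  let V : ℝ × X → ℝ := fun w => (max (uscEnv Q v w) ((ψ z₀ - 2 : ℝ) : EReal)).toReal
  have hV : ∀ w ∈ closedBall z₀ r,
      (V w : EReal) = max (uscEnv Q v w) ((ψ z₀ - 2 : ℝ) : EReal) := fun w hw =>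
    EReal.coe_toReal
      (max_lt ((hvle w hw).trans_lt (EReal.coe_lt_top _)) (EReal.coe_lt_top _)).ne
      ((EReal.bot_lt_coe _).trans_le (le_max_right _ _)).ne'
  have hVψ : ∀ w ∈ closedBall z₀ r, V w ≤ ψ w := fun w hw => by
    have h : (V w : EReal) ≤ (ψ w : EReal) := by
      rw [hV w hw]
      refine max_le (hvle w hw) (EReal.coe_le_coe_iff.2 ?_)
      linarith [hψ1 w hw]
    exact_mod_cast h
  have hK : closedBall z₀ r = closedBall z₀.1 r ×ˢ closedBall z₀.2 r :=
    (closedBall_prod_same z₀.1 z₀.2 r).symm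
  have hlsc : LowerSemicontinuousOn (fun w => (ψ w + φ w) + -V w) (closedBall z₀ r) := by
    refine LowerSemicontinuousOn.add
      ((hψ.mono hrQ).add hφ.continuousOn).lowerSemicontinuousOn fun w hw a ha => ?_
    have h : max (uscEnv Q v w) ((ψ z₀ - 2 : ℝ) : EReal) < ((-a : ℝ) : EReal) := by
      rw [← hV w hw]
      exact_mod_cast lt_neg.2 ha
    have hev := hQ.eventually_uscEnv_lt (hrQ hw) ((le_max_left _ _).trans_lt h)
    filter_upwards [hev.filter_mono nhdsWithin_le_nhds, self_mem_nhdsWithin] with y hy hyr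
    have h' : (V y : EReal) < ((-a : ℝ) : EReal) := by
      rw [hV y hyr]
      exact max_lt hy ((le_max_right _ _).trans_lt h)
    exact lt_neg.1 (by exact_mod_cast h')
  have hw₀V : ψ z₀ - δ < V w₀ := by
    have h : ((ψ z₀ - δ : ℝ) : EReal) < (V w₀ : EReal) := by
      rw [hV w₀ hw₀r]
      exact (hvw₀.trans_le (le_uscEnv v (hrQ hw₀r))).trans_le (le_max_left _ _)
    exact_mod_cast h
  rw [hK] at hlsc
  obtain ⟨w, hw, hww₀, hmin⟩ := exists_forall_le_add_mul_dist_snd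
    (isCompact_closedBall z₀.1 r) isClosed_closedBall.isComplete hlsc
    (fun z hz => by
      rw [← hK] at hz
      linarith [hVψ z hz, hφ0 z]) hε (z₀ := w₀)
    (by rw [← hK]; exact hw₀r)
  rw [← hK] at hw hmin
  have hwφ : φ w ≤ 2 * δ := by linarith [hVψ w hw]
  have hwball : w ∈ ball z₀ r := by
    rw [mem_ball, Prod.dist_eq, Real.dist_eq]
    refine max_lt (abs_lt_of_sq_lt_sq ?_ hr.le) (lt_of_pow_lt_pow_left₀ 2 hr.le ?_)
    · linarith [sq_nonneg (dist w.2 z₀.2)]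
    · linarith [sq_nonneg (w.1 - z₀.1)]
  have hwV : uscEnv Q v w = (V w : EReal) := by
    rw [hV w hw]
    refine (max_eq_left (le_of_not_gt fun hlt => ?_)).symm
    have h : (V w : EReal) = ((ψ z₀ - 2 : ℝ) : EReal) := (hV w hw).trans (max_eq_right hlt.le)
    rw [EReal.coe_eq_coe_iff] at h
    linarith [hψ1 w hw, hφ0 w]
  refine ⟨v, hv, w, hwball, -(ψ w + φ w + -V w), ?_, fun w' hw' => ?_⟩
  · rw [hwV, EReal.coe_eq_coe_iff]
    simp only [quadPert, dist_self, φ]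
    ring
  · have hw'r := ball_subset_closedBall hw'
    have h := hmin w' hw'r
    refine (le_max_left _ _).trans ((hV w' hw'r).symm.trans_le (EReal.coe_le_coe_iff.2 ?_))
    simp only [quadPert]
    simp only [φ] at h ⊢
    linarith

theorem exists_nonpos_near_of_iSup [CompleteSpace X] {Q : Set (ℝ × X)} (hQ : IsOpen Q)
    {F : (ℝ × X) → ℝ → ℝ → ℝ} (hF : ∀ z ∈ Q, ∀ q, Continuous fun p => F z p q)
    {S : Set ((ℝ × X) → EReal)} (hS : ∀ v ∈ S, IsSubsol Q F v)
    {ψ₁ ψ₂ : ℝ × X → ℝ} (h₁ : IsC1UnderQ Q ψ₁) (h₂ : IsCQ Q ψ₂) {z₀ : ℝ × X} (hz₀ : z₀ ∈ Q)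
    {R : ℝ} (hR : 0 < R)
    (heq : uscEnv Q (fun z => ⨆ v ∈ S, v z) z₀ = ((ψ₁ z₀ + ψ₂ z₀ : ℝ) : EReal))
    (hle : ∀ w ∈ ball z₀ R ∩ Q,
      uscEnv Q (fun z => ⨆ v ∈ S, v z) w ≤ ((ψ₁ w + ψ₂ w : ℝ) : EReal))
    {η : ℝ} (hη : 0 < η) :
    ∃ w ∈ Q, dist w z₀ < η ∧ ∃ s q, |s| ≤ uscEnvR Q (slopeT ψ₂) z₀ + η ∧
      |q - timeDeriv (fun w => ψ₁ w + ψ₂ w) z₀| ≤ η ∧ F w (slopeT ψ₁ w + s) q ≤ 0 := by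
  have h₁₂ := h₁.1.add h₂
  have hψ : ContinuousOn (fun z => ψ₁ z + ψ₂ z) Q := LocallyLipschitzOn.continuousOn h₁₂.1
  set M := uscEnvR Q (slopeT ψ₂) z₀ with hM
  obtain ⟨K, -, hK⟩ := h₂.1.exists_eventually_abs_sub_le hQ hz₀
  have hev : ∀ᶠ w in 𝓝 z₀, w ∈ Q ∧ w ∈ ball z₀ R ∧ w ∈ ball z₀ (η / 8) ∧
      ψ₁ z₀ + ψ₂ z₀ - 1 < ψ₁ w + ψ₂ w ∧ slopeT ψ₂ w < M + η / 4 ∧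
      (∀ᶠ y in 𝓝 w.2, |ψ₂ (w.1, y) - ψ₂ w| ≤ K * dist y w.2) ∧
      dist (timeDeriv (fun w => ψ₁ w + ψ₂ w) w) (timeDeriv (fun w => ψ₁ w + ψ₂ w) z₀) < η / 4 := by
    refine (hQ.eventually_mem hz₀).and <| Eventually.and (ball_mem_nhds z₀ hR) <|
      Eventually.and (ball_mem_nhds z₀ (by positivity)) <| Eventually.and ?_ <|
      Eventually.and ?_ <| hK.and ?_
    · exact (hψ.continuousAt (hQ.mem_nhds hz₀)).eventually_const_lt (by simp)
    · exact h₂.1.eventually_slopeT_lt hQ hz₀ (by linarith)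
    · exact (h₁₂.2.2.continuousAt (hQ.mem_nhds hz₀)).eventually (ball_mem_nhds _ (by positivity))
  obtain ⟨r, hr, hball⟩ := nhds_basis_closedBall.eventually_iff.1 hev
  have hr8 : ∀ w ∈ closedBall z₀ r, dist w z₀ < η / 8 := fun w hw => (hball hw).2.2.1
  obtain ⟨v, hv, w, hw, c, hvw, hmax⟩ := exists_touching_of_iSup hQ hψ hr
    (show 0 < η / 4 by positivity) (fun w hw => (hball hw).1) (fun w hw => (hball hw).2.2.2.1.le)
    heq (fun w hw => hle w ⟨(hball hw).2.1, (hball hw).1⟩)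
  have hwQ := (hball (ball_subset_closedBall hw)).1
  have hpert := isCQ_quadPert Q z₀ (η / 4) w.2 c
  have hsub := hS v hv ψ₁ (fun z => ψ₂ z + quadPert z₀ (η / 4) w.2 c z) h₁ (h₂.add hpert) w hwQ
    ⟨r - dist w z₀, sub_pos.2 hw, by rw [hvw, add_assoc], fun w' hw' => by
      rw [← add_assoc]
      exact hmax w' (ball_subset_ball' (by linarith) hw'.1)⟩
  rw [Fr_neg_nonpos_iff (uscEnvR_slopeT_nonneg _ _ _) (hF w hwQ _)] at hsub
  obtain ⟨s, hs, hFs⟩ := hsub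
  have hdw := hr8 w (ball_subset_closedBall hw)
  refine ⟨w, hwQ, by linarith, s, _, hs.trans ?_, ?_, hFs⟩
  · have hM0 : 0 ≤ M := uscEnvR_slopeT_nonneg _ _ _
    refine limsup_le_of_nonneg_of_eventually_le (slopeT_nonneg _) (by linarith) ?_
    filter_upwards [mem_nhdsWithin_of_mem_nhds (isOpen_ball.mem_nhds hw)] with y hy
    obtain ⟨-, -, hy8, -, hyM, hyK, -⟩ := hball (ball_subset_closedBall hy)
    have hy2 : dist y.2 z₀.2 < η / 8 := (le_max_right _ _).trans_lt hy8
    have hg : ∀ᶠ x in 𝓝 y.2, |quadPert z₀ (η / 4) w.2 c (y.1, x)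
        - quadPert z₀ (η / 4) w.2 c (y.1, y.2)| ≤ (2 * (η / 8) + η / 4) * dist x y.2 := by
      filter_upwards [isOpen_ball.mem_nhds (show y.2 ∈ ball z₀.2 (η / 8) from hy2)] with x hx
      exact abs_quadPert_sub_le (by positivity) _ _ hy2.le (le_of_lt hx)
    refine (mslope_add_le (by positivity) hyK hyM hg).trans ?_
    linarith
  · have htd := (hball (ball_subset_closedBall hw)).2.2.2.2.2.2
    have hsplit : timeDeriv (fun z => ψ₁ z + (ψ₂ z + quadPert z₀ (η / 4) w.2 c z)) w =
        timeDeriv (fun z => ψ₁ z + ψ₂ z) w + 2 * (w.1 - z₀.1) := by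
      rw [h₁.1.timeDeriv_add (h₂.add hpert) hwQ, h₂.timeDeriv_add hpert hwQ,
        h₁.1.timeDeriv_add h₂ hwQ, timeDeriv_quadPert, add_assoc]
    have hw1 : |w.1 - z₀.1| < η / 8 := (le_max_left _ _).trans_lt hdw
    rw [Real.dist_eq] at htd
    rw [hsplit]
    rw [abs_lt] at htd hw1
    rw [abs_le]
    constructor <;> linarith [htd.1, htd.2, hw1.1, hw1.2]

theorem isSubsol_iSup [CompleteSpace X] {Q : Set (ℝ × X)} (hQ : IsOpen Q)
    {F : (ℝ × X) → ℝ → ℝ → ℝ}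
    (hFc : ContinuousOn (fun w : (ℝ × X) × ℝ × ℝ => F w.1 w.2.1 w.2.2)
      (Q ×ˢ ((univ : Set ℝ) ×ˢ (univ : Set ℝ))))
    {S : Set ((ℝ × X) → EReal)} (hS : ∀ v ∈ S, IsSubsol Q F v) :
    IsSubsol Q F fun z => ⨆ v ∈ S, v z := by
  rintro ψ₁ ψ₂ h₁ h₂ z₀ hz₀ ⟨R, hR, heq, hle⟩
  have hF : ∀ z ∈ Q, ∀ q, Continuous fun p => F z p q := fun z hz q =>
    continuous_of_continuousOn_prod hFc hz q
  rw [Fr_neg_nonpos_iff (uscEnvR_slopeT_nonneg _ _ _) (hF z₀ hz₀ _)]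
  choose w hwQ hwz s q hs hq hFle using fun n : ℕ =>
    exists_nonpos_near_of_iSup hQ hF hS h₁ h₂ hz₀ hR heq hle (Nat.one_div_pos_of_nat (n := n))
  have h0 := tendsto_one_div_add_atTop_nhds_zero_nat (𝕜 := ℝ)
  have hw : Tendsto w atTop (𝓝 z₀) :=
    tendsto_iff_dist_tendsto_zero.2 (squeeze_zero (fun _ => dist_nonneg) (fun n => (hwz n).le) h0)
  have hqlim : Tendsto q atTop (𝓝 (timeDeriv (fun w => ψ₁ w + ψ₂ w) z₀)) :=
    tendsto_iff_dist_tendsto_zero.2 (squeeze_zero (fun _ => dist_nonneg) hq h0)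
  have hs1 : ∀ n, s n ∈ closedBall (0 : ℝ) (uscEnvR Q (slopeT ψ₂) z₀ + 1) := fun n => by
    rw [mem_closedBall_zero_iff, Real.norm_eq_abs]
    have : 1 / ((n : ℝ) + 1) ≤ 1 := by
      rw [div_le_one (by positivity)]
      linarith [(Nat.cast_nonneg n : (0 : ℝ) ≤ n)]
    linarith [hs n]
  obtain ⟨s₀, -, φ, hφ, hslim⟩ := (isCompact_closedBall _ _).tendsto_subseq hs1
  refine ⟨s₀, ?_, ?_⟩
  · have := (h0.const_add (uscEnvR Q (slopeT ψ₂) z₀)).comp hφ.tendsto_atTop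
    rw [add_zero] at this
    exact le_of_tendsto_of_tendsto' hslim.abs this fun n => hs (φ n)
  · have hφt := hφ.tendsto_atTop
    have hp : Tendsto (fun n => slopeT ψ₁ (w (φ n))) atTop (𝓝 (slopeT ψ₁ z₀)) :=
      (h₁.2.2.continuousAt (hQ.mem_nhds hz₀)).tendsto.comp (hw.comp hφt)
    have harg : Tendsto (fun n => (w (φ n), slopeT ψ₁ (w (φ n)) + s (φ n), q (φ n))) atTop
        (𝓝 (z₀, slopeT ψ₁ z₀ + s₀, timeDeriv (fun w => ψ₁ w + ψ₂ w) z₀)) :=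
      (hw.comp hφt).prodMk_nhds ((hp.add hslim).prodMk_nhds (hqlim.comp hφt))
    have hopen : IsOpen (Q ×ˢ ((univ : Set ℝ) ×ˢ (univ : Set ℝ))) :=
      hQ.prod (isOpen_univ.prod isOpen_univ)
    have hFlim := (hFc.continuousAt (hopen.mem_nhds
      (show (z₀, slopeT ψ₁ z₀ + s₀, timeDeriv (fun w => ψ₁ w + ψ₂ w) z₀) ∈ _ from
        ⟨hz₀, trivial, trivial⟩))).tendsto.comp harg
    exact le_of_tendsto' hFlim fun n => hFle (φ n)

theorem uscEnv_neg {α : Type*} [TopologicalSpace α] (s : Set α) (u : α → EReal) (z : α) :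
    uscEnv s (fun a => -u a) z = -lscEnv s u z :=
  EReal.limsup_neg

theorem isSupersol_iff_isSubsol_neg {Q : Set (ℝ × X)} {F : (ℝ × X) → ℝ → ℝ → ℝ}
    (hF : ∀ z ∈ Q, ∀ q, Continuous fun p => F z p q) (u : ℝ × X → EReal) :
    IsSupersol Q F u ↔ IsSubsol Q (fun z p q => -F z p (-q)) fun z => -u z := by
  have hF' : ∀ z ∈ Q, ∀ q, Continuous fun p => -F z p (-q) := fun z hz q => (hF z hz _).neg
  have hcoe : ∀ a b : ℝ, ((-a + -b : ℝ) : EReal) = -((a + b : ℝ) : EReal) := fun a b => by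
    rw [← neg_add, EReal.coe_neg]
  have htd : ∀ (ψ₁ ψ₂ : ℝ × X → ℝ) z, timeDeriv (fun w => -ψ₁ w + -ψ₂ w) z =
      -timeDeriv (fun w => ψ₁ w + ψ₂ w) z := fun ψ₁ ψ₂ z => by
    simp only [← timeDeriv_neg, neg_add]
  constructor
  · rintro h ψ₁ ψ₂ h₁ h₂ z hz ⟨R, hR, heq, hle⟩
    have := h (fun z => -ψ₁ z) (fun z => -ψ₂ z) h₁.neg h₂.neg z hz ⟨R, hR, ?_, fun w hw => ?_⟩
    · rw [Fr_nonneg_iff (uscEnvR_slopeT_nonneg _ _ _) (hF z hz _)] at this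
      rw [Fr_neg_nonpos_iff (uscEnvR_slopeT_nonneg _ _ _) (hF' z hz _)]
      simpa only [slopeT_neg, htd, neg_nonpos] using this
    · rw [hcoe, ← heq, uscEnv_neg, neg_neg]
    · rw [hcoe, EReal.neg_le, ← uscEnv_neg]
      exact hle w hw
  · rintro h ψ₁ ψ₂ h₁ h₂ z hz ⟨R, hR, heq, hle⟩
    have := h (fun z => -ψ₁ z) (fun z => -ψ₂ z) h₁.neg h₂.neg z hz ⟨R, hR, ?_, fun w hw => ?_⟩
    · rw [Fr_neg_nonpos_iff (uscEnvR_slopeT_nonneg _ _ _) (hF' z hz _)] at this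
      rw [Fr_nonneg_iff (uscEnvR_slopeT_nonneg _ _ _) (hF z hz _)]
      simpa only [slopeT_neg, htd, neg_nonpos, neg_neg] using this
    · rw [hcoe, ← heq, uscEnv_neg]
    · rw [hcoe, uscEnv_neg, EReal.neg_le_neg_iff]
      exact hle w hw

theorem isSupersol_iInf [CompleteSpace X] {Q : Set (ℝ × X)} (hQ : IsOpen Q)
    {F : (ℝ × X) → ℝ → ℝ → ℝ}
    (hFc : ContinuousOn (fun w : (ℝ × X) × ℝ × ℝ => F w.1 w.2.1 w.2.2)
      (Q ×ˢ ((univ : Set ℝ) ×ˢ (univ : Set ℝ))))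
    {S : Set ((ℝ × X) → EReal)} (hS : ∀ v ∈ S, IsSupersol Q F v) :
    IsSupersol Q F fun z => ⨅ v ∈ S, v z := by
  have hF : ∀ z ∈ Q, ∀ q, Continuous fun p => F z p q := fun z hz q =>
    continuous_of_continuousOn_prod hFc hz q
  rw [isSupersol_iff_isSubsol_neg hF]
  have hFc' : ContinuousOn (fun w : (ℝ × X) × ℝ × ℝ => -F w.1 w.2.1 (-w.2.2))
      (Q ×ˢ ((univ : Set ℝ) ×ˢ (univ : Set ℝ))) :=
    (hFc.comp (f := fun w : (ℝ × X) × ℝ × ℝ => (w.1, w.2.1, -w.2.2)) (by fun_prop)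
      fun w hw => ⟨hw.1, trivial, trivial⟩).neg
  have hS' : ∀ v ∈ (fun v z => -v z) '' S, IsSubsol Q (fun z p q => -F z p (-q)) v := by
    rintro _ ⟨v, hv, rfl⟩
    exact (isSupersol_iff_isSubsol_neg hF v).1 (hS v hv)
  convert isSubsol_iSup hQ hFc' hS' using 2 with z
  rw [iSup_image]
  exact (EReal.negOrderIso.map_iInf₂ _)

end Stability

/-- stability under extremum. -/
theorem stmt8 [CompleteSpace X] (hgeo : IsGeodesicSpace X)
    (Q : Set (ℝ × X)) (hQ : IsOpen Q)
    (F : (ℝ × X) → ℝ → ℝ → ℝ)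
    (hFc : ContinuousOn (fun w : (ℝ × X) × ℝ × ℝ => F w.1 w.2.1 w.2.2)
      (Q ×ˢ ((Set.univ : Set ℝ) ×ˢ (Set.univ : Set ℝ))))
    (hFe : ∀ z p q, F z (-p) q = F z p q)
    (hFconv : ∀ z q, ConvexOn ℝ Set.univ fun p => F z p q)
    (S : Set ((ℝ × X) → EReal)) :
    ((∀ v ∈ S, IsSubsol Q F v) → IsSubsol Q F (fun z => ⨆ v ∈ S, v z)) ∧
    ((∀ v ∈ S, IsSupersol Q F v) → IsSupersol Q F (fun z => ⨅ v ∈ S, v z)) := by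
  exact ⟨isSubsol_iSup hQ hFc, isSupersol_iInf hQ hFc⟩
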